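/- arXiv:1807.00481 — 2 statements merged into one kernel-verified Lean document; each statement's English description precedes it below -/
import Mathlib

section
/- Let n ≥ 1 and let μ be a partition of n. Every complex eigenvalue of the matrix N_{2μ} is an integer. -/
/-- The multiset of cardinalities of the orbits of a subgroup of permutations
acting on a finite type. -/
noncomputable def orbitSizes {α : Type*} [Fintype α] (G : Subgroup (Equiv.Perm α)) :
    Multiset ℕ :=
  letI : Fintype (Quotient (MulAction.orbitRel G α)) := Fintype.ofFinite _
  (Finset.univ : Finset (Quotient (MulAction.orbitRel G α))).val.map
    fun q => Nat.card (MulAction.orbit G q.out)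

/-- `d(A,B)`. -/
noncomputable def dMatch {N : ℕ} (A B : Equiv.Perm (Fin N)) : Multiset ℕ :=
  orbitSizes (Subgroup.closure {A, B})

/-- Doubling every part of a partition (as a multiset). -/
def twice (m : Multiset ℕ) : Multiset ℕ := m.map (fun i => 2 * i)

/-- Perfect matchings of the complete graph on `Fin N`. -/
abbrev PerfMatching (N : ℕ) := {A : Equiv.Perm (Fin N) // A * A = 1 ∧ ∀ x, A x ≠ x}

/-- The orbital basis element `N_{2μ}`. -/
noncomputable def Nmat (n : ℕ) (μ : Nat.Partition n) :
    Matrix (PerfMatching (2 * n)) (PerfMatching (2 * n)) ℂ :=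
  Matrix.of fun A B => if dMatch A.1 B.1 = twice μ.parts then 1 else 0

/-- Powers of a permutation by exponents coprime to its order are conjugate to it. -/
theorem Equiv.Perm.isConj_pow_of_coprime {α : Type*} [Fintype α] [DecidableEq α]
    (σ : Equiv.Perm α) {k : ℕ} (hk : k.Coprime (orderOf σ)) : IsConj σ (σ ^ k) := by
  rw [isConj_iff_cycleType_eq]
  revert hk
  induction σ using cycle_induction_on with
  | base_one => simp
  | base_cycles σ hσ =>
    intro hk
    rw [hσ.cycleType, (hσ.pow_iff.2 hk).cycleType, support_pow_coprime hk]
  | induction_disjoint σ τ hd _ hσ hτ =>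
    intro hk
    rw [hd.orderOf] at hk
    rw [hd.commute.mul_pow, hd.cycleType_mul, (hd.pow_disjoint_pow k k).cycleType_mul,
      ← hσ (hk.coprime_dvd_right (Nat.dvd_lcm_left _ _)),
      ← hτ (hk.coprime_dvd_right (Nat.dvd_lcm_right _ _))]

/-- The sum of the character values over the powers of an element is a natural number, namely
a multiple of the dimension of the space of its fixed vectors. -/
theorem Representation.sum_trace_pow {K G V : Type*} [Field K] [CharZero K] [Group G]
    [AddCommGroup V] [Module K V] [FiniteDimensional K V] (ρ : Representation K G V) (g : G)
    (hg : orderOf g ≠ 0) :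
    ∃ d : ℕ, ∑ j ∈ Finset.range (orderOf g), LinearMap.trace K V (ρ (g ^ j)) = d := by
  set m := orderOf g with hm
  set S : Module.End K V := ∑ j ∈ Finset.range m, ρ (g ^ j) with hS
  have h1 : ρ g * S = S := by
    have := Finset.sum_range_succ' (fun j => ρ (g ^ j)) m
    rw [Finset.sum_range_succ, pow_zero, hm, pow_orderOf_eq_one, ← hm] at this
    rw [hS, Finset.mul_sum]
    simp_rw [← map_mul, ← pow_succ']
    exact (add_right_cancel this).symm
  have h2 (j : ℕ) : ρ (g ^ j) * S = S := by
    induction j with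
    | zero => simp
    | succ j ih => rw [pow_succ, map_mul, mul_assoc, h1, ih]
  have h3 : S * S = (m : K) • S := by
    conv_lhs => enter [1]; rw [hS]
    rw [Finset.sum_mul, Finset.sum_congr rfl fun j _ => h2 j]
    simp [Nat.cast_smul_eq_nsmul]
  have hm0 : (m : K) ≠ 0 := by exact_mod_cast hg
  have hP : IsIdempotentElem ((m : K)⁻¹ • S) := by
    rw [IsIdempotentElem, smul_mul_smul_comm, h3, smul_smul]
    congr 1
    field_simp
  have ht := (LinearMap.IsIdempotentElem.isProj_range _ hP).trace
  rw [map_smul, smul_eq_mul, inv_mul_eq_iff_eq_mul₀ hm0] at ht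
  refine ⟨m * Module.finrank K (LinearMap.range ((m : K)⁻¹ • S)), ?_⟩
  rw [← map_sum, ← hS, ht]
  push_cast
  rfl

/-- If every element of a finite group is conjugate to its powers with exponents coprime to its
order, then all characters of the group are rational valued. -/
theorem Representation.trace_rational {K G V : Type*} [Field K] [CharZero K] [Group G] [Finite G]
    [AddCommGroup V] [Module K V] [FiniteDimensional K V] (ρ : Representation K G V)
    (hG : ∀ (g : G) (k : ℕ), k.Coprime (orderOf g) → IsConj g (g ^ k)) (g : G) :
    ∃ q : ℚ, LinearMap.trace K V (ρ g) = q := by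
  induction hm : orderOf g using Nat.strong_induction_on generalizing g with
  | _ m ih =>
  have hpos : 0 < m := hm ▸ orderOf_pos g
  have hconj {j : ℕ} (hj : j.Coprime m) :
      LinearMap.trace K V (ρ (g ^ j)) = LinearMap.trace K V (ρ g) := by
    obtain ⟨c, hc⟩ := isConj_iff.1 (hG g j (hm ▸ hj))
    rw [← hc, map_mul, LinearMap.trace_mul_comm, ← map_mul]
    simp
  have hlow {j : ℕ} (hj : ¬ j.Coprime m) : ∃ q : ℚ, LinearMap.trace K V (ρ (g ^ j)) = q := by
    refine ih _ ?_ _ rfl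
    rw [orderOf_pow, hm]
    refine Nat.div_lt_self hpos ?_
    have : 0 < m.gcd j := Nat.gcd_pos_of_pos_left _ hpos
    rw [Nat.coprime_comm, Nat.Coprime] at hj
    omega
  choose! q hq using fun j => hlow (j := j)
  obtain ⟨d, hd⟩ := ρ.sum_trace_pow g (hm ▸ hpos.ne')
  rw [hm, ← Finset.sum_filter_add_sum_filter_not _ (fun j => j.Coprime m),
    Finset.sum_congr rfl fun j hj => hconj (Finset.mem_filter.1 hj).2,
    Finset.sum_congr (s₁ := Finset.filter (fun j : ℕ => ¬ j.Coprime m) _) rfl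
      fun j hj => hq j (Finset.mem_filter.1 hj).2, Finset.sum_const, nsmul_eq_mul] at hd
  set s := Finset.filter (fun j => j.Coprime m) (Finset.range m) with hs
  have hne : (s.card : K) ≠ 0 := by
    rw [Nat.cast_ne_zero, Finset.card_ne_zero]
    rcases (Nat.succ_le_of_lt hpos).eq_or_lt with h | h
    · exact ⟨0, by simp [hs, ← h]⟩
    · exact ⟨1, by simp [hs, h]⟩
  refine ⟨(d - ∑ j ∈ Finset.range m with ¬ j.Coprime m, q j) / s.card, ?_⟩
  push_cast
  rw [eq_div_iff hne, ← hd]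
  ring

/-- Double centralizer theorem: an endomorphism commuting with the commutant of a representation
of a finite group comes from the group algebra. -/
theorem Representation.eq_sum_smul_of_commute {K G V : Type*} [Field K] [CharZero K] [Group G]
    [Fintype G] [AddCommGroup V] [Module K V] [FiniteDimensional K V] (ρ : Representation K G V)
    (N : Module.End K V)
    (hN : ∀ T : Module.End K V, (∀ g, Commute T (ρ g)) → Commute N T) :
    ∃ a : G → K, N = ∑ g, a g • ρ g := by
  classical
  have : NeZero (Nat.card G : K) := ⟨by simp⟩
  let M := ρ.asModule
  let R := MonoidAlgebra K G
  have hss : IsSemisimpleModule R M := inferInstance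
  let e : M ≃ₗ[K] V := ρ.asModuleEquiv
  let toV (T : Module.End R M) : Module.End K V :=
    e.toLinearMap ∘ₗ (T.restrictScalars K) ∘ₗ e.symm.toLinearMap
  have htoV (T : Module.End R M) (g : G) : Commute (toV T) (ρ g) := by
    refine LinearMap.ext fun v => ?_
    have := congrArg e (T.map_smul (MonoidAlgebra.single g (1 : K)) (e.symm v))
    rw [Representation.single_smul, Representation.single_smul, one_smul, one_smul] at this
    exact this
  let f : Module.End (Module.End R M) M :=
    { toFun := fun m => e.symm (N (e m))
      map_add' := by simp
      map_smul' := fun T m => by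
        have := congrArg e.symm (LinearMap.congr_fun (hN (toV T) (htoV T)) (e m))
        simpa [toV] using this }
  obtain ⟨r, hr⟩ := jacobson_density f
    (Finset.univ.image fun i => e.symm (Module.finBasis K V i))
  refine ⟨fun g => r.coeff g, ?_⟩
  have hNr : N = ρ.asAlgebraHom r := by
    refine (Module.finBasis K V).ext fun i => ?_
    have := congrArg e (hr (e.symm (Module.finBasis K V i)) (by simp))
    rw [Representation.asModuleEquiv_map_smul] at this
    simpa [f, e] using this
  rw [hNr, Representation.asAlgebraHom_def, MonoidAlgebra.lift_apply]
  exact Finsupp.sum_fintype _ _ fun _ => zero_smul _ _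

/-- Two fixed-point-free involutions are interchanged by conjugation by some permutation. -/
theorem Equiv.Perm.exists_conj_swap {α : Type*} [Fintype α] [LinearOrder α] {A B : Equiv.Perm α}
    (hA : A * A = 1) (hA' : ∀ x, A x ≠ x) (hB : B * B = 1) (hB' : ∀ x, B x ≠ x) :
    ∃ g : Equiv.Perm α, g * A * g⁻¹ = B ∧ g * B * g⁻¹ = A := by
  classical
  have hAA (x : α) : A (A x) = x := congr($hA x)
  have hBB (x : α) : B (B x) = x := congr($hB x)
  set w := A * B with hw
  have hwx (x : α) : w x = A (B x) := rfl
  have hAi : A⁻¹ = A := inv_eq_of_mul_eq_one_left hA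
  have hBi : B⁻¹ = B := inv_eq_of_mul_eq_one_left hB
  have hwi' : w⁻¹ = B * A := by rw [hw, mul_inv_rev, hAi, hBi]
  have hwi (x : α) : w⁻¹ x = B (A x) := by rw [hwi']; rfl
  have hAw (i : ℤ) : A * w ^ i = (w ^ i)⁻¹ * A := by
    have h1 : A * w * A⁻¹ = w⁻¹ := by rw [hwi', hAi, hw, ← mul_assoc, hA, one_mul]
    rw [← inv_zpow, ← h1, conj_zpow]
    group
  have hsame (x : α) : ¬ w.SameCycle x (A x) := by
    rintro ⟨i, hi⟩
    have key (j : ℤ) : A ((w ^ j) x) = (w ^ (-j + i)) x := by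
      rw [zpow_add, zpow_neg, mul_apply, hi]
      exact congr($(hAw j) x)
    obtain ⟨j, rfl | rfl⟩ := Int.even_or_odd' i
    · refine hA' ((w ^ j) x) ?_
      rw [key]
      ring_nf
    · refine hB' ((w ^ j) x) ?_
      have := key (j + 1)
      rw [add_comm, zpow_one_add, mul_apply, hwx, hAA] at this
      rw [this]
      ring_nf
  let rep (x : α) : α := Quotient.out (Quotient.mk (SameCycle.setoid w) x)
  have hrep {x y : α} : rep x = rep y ↔ w.SameCycle x y := by
    rw [Quotient.out_inj]
    exact Quotient.eq
  have hrw (x : α) : rep (w x) = rep x := hrep.2 (sameCycle_apply_left.2 (SameCycle.refl w x))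
  have hrAw (x : α) : rep (A (w x)) = rep (A x) := by
    rw [← hrw (A (w x)), hwx, hwx, hAA, hBB]
  let p (x : α) : Prop := rep x < rep (A x)
  have hpA (x : α) : p (A x) ↔ ¬ p x := by
    have : rep x ≠ rep (A x) := fun h => hsame x (hrep.1 h)
    simp only [p, hAA, not_lt]
    exact ⟨le_of_lt, fun h => lt_of_le_of_ne h this.symm⟩
  have hpw (x : α) : p (w x) ↔ p x := by simp only [p, hrw, hrAw]
  have hpB (x : α) : p (B x) ↔ ¬ p x := by
    rw [← hpw x, hwx, hpA, not_not]
  obtain ⟨c, hc⟩ := isConj_iff.1 (isConj_of_cycleType_eq (cycleType_inv (w.subtypePerm hpw)).symm)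
  have hcw (y : {x // p x}) : (c ⟨w y, (hpw y).2 y.2⟩ : α) = w⁻¹ (c y) := by
    have h := congr((($hc (c y) : {x // p x}) : α))
    simpa using h
  let f (x : α) : α := if h : p x then c ⟨x, h⟩ else B (c ⟨A x, (hpA x).2 h⟩)
  have hf1 (x : α) (h : p x) : f x = c ⟨x, h⟩ := dif_pos h
  have hf2 (x : α) (h : ¬ p x) : f x = B (c ⟨A x, (hpA x).2 h⟩) := dif_neg h
  have hpf (x : α) : p (f x) ↔ p x := by
    by_cases h : p x
    · simp [hf1 x h, h, (c ⟨x, h⟩).2]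
    · simp [hf2 x h, h, hpB, (c ⟨A x, (hpA x).2 h⟩).2]
  have hinj : Function.Injective f := by
    intro x y hxy
    have hp : p x ↔ p y := by rw [← hpf x, hxy, hpf]
    by_cases h : p x
    · rw [hf1 x h, hf1 y (hp.1 h), Subtype.coe_inj, c.apply_eq_iff_eq, Subtype.mk.injEq] at hxy
      exact hxy
    · rw [hf2 x h, hf2 y (mt hp.2 h), B.apply_eq_iff_eq, Subtype.coe_inj, c.apply_eq_iff_eq,
        Subtype.mk.injEq, A.apply_eq_iff_eq] at hxy
      exact hxy
  have hfA (x : α) : f (A x) = B (f x) := by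
    by_cases h : p x
    · rw [hf2 (A x) (by simpa [hpA] using h), hf1 x h]
      simp only [hAA]
    · rw [hf1 (A x) ((hpA x).2 h), hf2 x h, hBB]
  have hfB1 (x : α) (h : p x) : f (B x) = A (f x) := by
    have := hcw ⟨x, h⟩
    rw [hf2 (B x) (by simpa [hpB] using h), hf1 x h]
    rw [hwi] at this
    exact (congrArg B this).trans (hBB _)
  have hfB (x : α) : f (B x) = A (f x) := by
    by_cases h : p x
    · exact hfB1 x h
    · have := hfB1 (B x) ((hpB x).2 h)
      rw [hBB] at this
      rw [this, hAA]
  let g : Equiv.Perm α := Equiv.ofBijective f (Finite.injective_iff_bijective.1 hinj)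
  exact ⟨g, mul_inv_eq_iff_eq_mul.2 (Equiv.ext hfA), mul_inv_eq_iff_eq_mul.2 (Equiv.ext hfB)⟩

/-- The permutation representation of `G` on functions on a `G`-set. -/
def Representation.onFun (K : Type*) {G X : Type*} [Field K] [Group G] [MulAction G X] :
    Representation K G (X → K) where
  toFun g := LinearMap.funLeft K K (g⁻¹ • ·)
  map_one' := by ext; simp
  map_mul' g h := by ext; simp [LinearMap.funLeft, mul_smul]

open scoped Matrix in
/-- If any two points of a `G`-set can be interchanged by `G`, then every `G`-invariant matrix is a
linear combination of the permutation matrices of elements of `G`. -/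
theorem Matrix.exists_eq_sum_of_symm_orbitals {K G X : Type*} [Field K] [CharZero K] [Group G]
    [Fintype G] [Fintype X] [DecidableEq X] [MulAction G X]
    (hsymm : ∀ x y : X, ∃ g : G, g • x = y ∧ g • y = x)
    (N : Matrix X X K) (hN : ∀ (g : G) x y, N (g • x) (g • y) = N x y) :
    ∃ a : G → K, ∀ x y, N x y = ∑ g, if g • y = x then a g else 0 := by
  have hs {T : Matrix X X K} (hT : ∀ (g : G) x y, T (g • x) (g • y) = T x y) : Tᵀ = T := by
    ext x y
    obtain ⟨g, h1, h2⟩ := hsymm x y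
    rw [Matrix.transpose_apply, ← hT g y x, h1, h2]
  obtain ⟨a, ha⟩ := (Representation.onFun K (G := G) (X := X)).eq_sum_smul_of_commute
    (Matrix.toLin' N) fun T hT => by
    obtain ⟨T, rfl⟩ := Matrix.toLin'.surjective T
    have hT' (g : G) (x y : X) : T (g • x) (g • y) = T x y := by
      have := congrFun (LinearMap.congr_fun (hT g⁻¹) (Pi.single (g • y) 1)) x
      have h2 : Representation.onFun K g⁻¹ (Pi.single (g • y) (1 : K)) = Pi.single y 1 := by
        ext z
        simp [Representation.onFun, LinearMap.funLeft, Pi.single_apply]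
      simp [h2] at this
      simp [this, Representation.onFun, LinearMap.funLeft]
    have hNT (g : G) (x y : X) : (N * T) (g • x) (g • y) = (N * T) x y := by
      rw [Matrix.mul_apply, Matrix.mul_apply, ← Equiv.sum_comp (MulAction.toPerm g)]
      simp [hN, hT']
    have : N * T = T * N := by
      rw [← hs hNT, Matrix.transpose_mul, hs hN, hs hT']
    rw [commute_iff_eq, Module.End.mul_eq_comp, Module.End.mul_eq_comp, ← Matrix.toLin'_mul, this,
      Matrix.toLin'_mul]
  refine ⟨a, fun x y => ?_⟩
  have := congrFun (LinearMap.congr_fun ha (Pi.single y 1)) x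
  simp [Representation.onFun, LinearMap.funLeft, Pi.single_apply, inv_smul_eq_iff] at this
  simpa [eq_comm] using this

/-- If every element of a finite group is conjugate to its powers with exponents coprime to its
order, and any two points of a `G`-set can be interchanged by an element of `G`, then the eigenvalues
of any `G`-invariant integer matrix are integers. -/
theorem Matrix.eigenvalue_integral_of_symm_orbitals {G X : Type*} [Group G]
    [Finite G] [Fintype X] [DecidableEq X] [MulAction G X]
    (hG : ∀ (g : G) (k : ℕ), k.Coprime (orderOf g) → IsConj g (g ^ k))
    (hsymm : ∀ x y : X, ∃ g : G, g • x = y ∧ g • y = x)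
    (N : Matrix X X ℤ) (hN : ∀ (g : G) x y, N (g • x) (g • y) = N x y) (c : ℂ)
    (hc : Module.End.HasEigenvalue (Matrix.toLin' (N.map (Int.cast : ℤ → ℂ))) c) :
    ∃ m : ℤ, c = m := by
  have := Fintype.ofFinite G
  set L := Matrix.toLin' (N.map (Int.cast : ℤ → ℂ)) with hL
  obtain ⟨a, ha⟩ := Matrix.exists_eq_sum_of_symm_orbitals hsymm (N.map (Int.cast : ℤ → ℚ))
    (fun g x y => by simp [hN])
  let ρ := Representation.onFun ℂ (G := G) (X := X)
  have hLρ : L = ∑ g, (a g : ℂ) • ρ g := by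
    refine LinearMap.pi_ext' fun y => LinearMap.ext_ring (funext fun x => ?_)
    have := congrArg (Rat.cast : ℚ → ℂ) (ha x y)
    push_cast [apply_ite (Rat.cast : ℚ → ℂ)] at this
    simp [hL, ρ, Representation.onFun, LinearMap.funLeft, Pi.single_apply, inv_smul_eq_iff]
    simpa [eq_comm] using this
  have hcomm (g : G) : Commute L (ρ g) := by
    refine LinearMap.pi_ext' fun y => LinearMap.ext_ring (funext fun x => ?_)
    have h2 : ρ g (Pi.single y (1 : ℂ)) = Pi.single (g • y) 1 := by
      ext z
      simp [ρ, Representation.onFun, LinearMap.funLeft, Pi.single_apply, inv_smul_eq_iff]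
    have := hN g (g⁻¹ • x) y
    simp at this
    simp [hL, h2, this]
    simp [ρ, Representation.onFun, LinearMap.funLeft]
  let W := Module.End.eigenspace L c
  have hW (g : G) : ∀ v ∈ W, ρ g v ∈ W := fun v hv => by
    rw [Module.End.mem_eigenspace_iff] at hv ⊢
    rw [← Module.End.mul_apply, (hcomm g).eq, Module.End.mul_apply, hv, map_smul]
  let ρW : Representation ℂ G W :=
    { toFun := fun g => (ρ g).restrict (hW g)
      map_one' := by ext; simp
      map_mul' := fun g h => by ext; simp }
  have hsum : c • (1 : Module.End ℂ W) = ∑ g, (a g : ℂ) • ρW g := by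
    ext1 v
    apply Subtype.ext
    have h1 := LinearMap.congr_fun hLρ v
    rw [Module.End.mem_eigenspace_iff.1 v.2] at h1
    simpa [ρW] using h1
  choose q hq using ρW.trace_rational hG
  have ht := congrArg (LinearMap.trace ℂ W) hsum
  simp only [map_smul, map_sum, hq, LinearMap.trace_one, smul_eq_mul] at ht
  have hd : (Module.finrank ℂ W : ℂ) ≠ 0 := by
    have : Nontrivial W := Submodule.nontrivial_iff_ne_bot.2 hc
    exact_mod_cast Module.finrank_pos.ne'
  have hcq : c = ((∑ g, a g * q g) / Module.finrank ℂ W : ℚ) := by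
    push_cast
    rw [eq_div_iff hd, ht]
  have hc_int : IsIntegral ℤ c := by
    have hroot := (Module.End.hasEigenvalue_iff_isRoot_charpoly _ _).1 hc
    rw [hL, Matrix.charpoly_toLin', show (Int.cast : ℤ → ℂ) = Int.castRingHom ℂ from rfl,
      Matrix.charpoly_map, Polynomial.IsRoot.def, Polynomial.eval_map] at hroot
    exact ⟨N.charpoly, N.charpoly_monic, hroot⟩
  rw [hcq] at hc_int ⊢
  have hcq_int : IsIntegral ℤ ((∑ g, a g * q g) / Module.finrank ℂ W : ℚ) :=
    (isIntegral_algebraMap_iff (algebraMap ℚ ℂ).injective).1 hc_int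
  obtain ⟨m, hm⟩ := IsIntegrallyClosed.isIntegral_iff.1 hcq_int
  exact ⟨m, by rw [← hm]; simp⟩

/-- Conjugate permutation groups have the same orbit sizes. -/
theorem orbitSizes_map_conj {α : Type*} [Fintype α] (G : Subgroup (Equiv.Perm α))
    (g : Equiv.Perm α) : orbitSizes (G.map (MulAut.conj g).toMonoidHom) = orbitSizes G := by
  set H := G.map (MulAut.conj g).toMonoidHom
  have horb (x : α) : MulAction.orbit H (g x) = g '' MulAction.orbit G x := by
    ext y
    simp only [MulAction.mem_orbit_iff, Set.mem_image]
    constructor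
    · rintro ⟨⟨_, k, hk, rfl⟩, rfl⟩
      exact ⟨k x, ⟨⟨k, hk⟩, rfl⟩, by simp [Subgroup.smul_def]⟩
    · rintro ⟨_, ⟨⟨k, hk⟩, rfl⟩, rfl⟩
      exact ⟨⟨_, k, hk, rfl⟩, by simp [Subgroup.smul_def]⟩
  have hrel (x y : α) : MulAction.orbitRel G α x y ↔ MulAction.orbitRel H α (g x) (g y) := by
    rw [MulAction.orbitRel_apply, MulAction.orbitRel_apply, horb, g.injective.mem_set_image]
  let e : Quotient (MulAction.orbitRel G α) ≃ Quotient (MulAction.orbitRel H α) :=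
    Quotient.congr g hrel
  have he (q : Quotient (MulAction.orbitRel G α)) :
      MulAction.orbit H (e q).out = g '' MulAction.orbit G q.out := by
    rw [← horb, MulAction.orbit_eq_iff, ← MulAction.orbitRel_apply, ← Quotient.eq,
      Quotient.out_eq]
    conv_lhs => rw [← q.out_eq]
    rfl
  unfold orbitSizes
  let _ : Fintype (Quotient (MulAction.orbitRel G α)) := Fintype.ofFinite _
  let _ : Fintype (Quotient (MulAction.orbitRel H α)) := Fintype.ofFinite _
  have := congrArg Finset.val (Finset.map_univ_equiv e)
  rw [← this, Finset.map_val, Multiset.map_map]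
  refine Multiset.map_congr rfl fun q _ => ?_
  simp [he, Set.ncard_image_of_injective _ g.injective]

theorem dMatch_conj {N : ℕ} (g A B : Equiv.Perm (Fin N)) :
    dMatch (g * A * g⁻¹) (g * B * g⁻¹) = dMatch A B := by
  rw [dMatch, dMatch, ← orbitSizes_map_conj (Subgroup.closure {A, B}) g, MonoidHom.map_closure,
    Set.image_pair]
  rfl

/-- The action of permutations on perfect matchings by conjugation. -/
instance PerfMatching.instMulAction (N : ℕ) :
    MulAction (Equiv.Perm (Fin N)) (PerfMatching N) where
  smul g A := ⟨g * A.1 * g⁻¹, by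
    rw [show g * A.1 * g⁻¹ * (g * A.1 * g⁻¹) = g * (A.1 * A.1) * g⁻¹ by group, A.2.1]
    group, fun x hx => A.2.2 (g⁻¹ x) (g.eq_symm_apply.2 hx)⟩
  one_smul A := Subtype.ext (by change 1 * A.1 * 1⁻¹ = A.1; group)
  mul_smul g h A := Subtype.ext (by
    change g * h * A.1 * (g * h)⁻¹ = g * (h * A.1 * h⁻¹) * g⁻¹
    group)

theorem PerfMatching.coe_smul {N : ℕ} (g : Equiv.Perm (Fin N)) (A : PerfMatching N) :
    (g • A).1 = g * A.1 * g⁻¹ := rfl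

/-- Every complex eigenvalue of the orbital basis element `N_{2μ}` of the Bose–Mesner
algebra of the perfect matching association scheme is an integer. -/
theorem nmat_eigenvalues_integral (n : ℕ) (hn : 1 ≤ n) (μ : Nat.Partition n) :
    ∀ c : ℂ, Module.End.HasEigenvalue (Matrix.toLin' (Nmat n μ)) c →
      ∃ m : ℤ, c = (m : ℂ) := by
  intro c hc
  refine Matrix.eigenvalue_integral_of_symm_orbitals (G := Equiv.Perm (Fin (2 * n)))
    (fun g k => g.isConj_pow_of_coprime) (fun A B => ?_)
    (Matrix.of fun A B : PerfMatching (2 * n) => if dMatch A.1 B.1 = twice μ.parts then 1 else 0)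
    (fun g A B => by simp [PerfMatching.coe_smul, dMatch_conj]) c ?_
  · obtain ⟨g, h1, h2⟩ := Equiv.Perm.exists_conj_swap A.2.1 A.2.2 B.2.1 B.2.2
    exact ⟨g, Subtype.ext h1, Subtype.ext h2⟩
  · convert hc using 2
    ext A B
    simp [Nmat]
end

section
/- Let μ be a partition with all parts ≥ 2 and |μ| = k ≥ 2, let n ≥ k, and let I be a perfect matching of Fin (2n). Let π be a permutation of Fin (2n) whose nontrivial orbit sizes form the multiset of parts of μ, and let τ be the partition with all parts ≥ 2 such that d(I, π I π⁻¹) = 2(τ, 1^{n−|τ|}). Then τ̄ ≤ μ̄ in the merging order; that is, either |τ̄| < |μ̄|, or the multiset of parts of τ̄ can be obtained by grouping the multiset of parts of μ̄ into disjoint blocks and replacing each block by the sum of its elements. -/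
/-- The multiset of sizes of the orbits of the cyclic group generated by a
permutation (the cycle type, counting fixed points as parts equal to 1). -/
noncomputable def permOrbitSizes {N : ℕ} (π : Equiv.Perm (Fin N)) : Multiset ℕ :=
  orbitSizes (Subgroup.zpowers π)

/-- The merging order on partitions (as multisets of positive integers):
`σ ≤ λ` iff `|σ| < |λ|`, or the multiset `σ` can be obtained by grouping the parts of
`λ` into disjoint (nonempty) blocks and replacing each block by the sum of its
elements. -/
def MergeLE (σ lam : Multiset ℕ) : Prop :=
  σ.sum < lam.sum ∨
    ∃ P : Multiset (Multiset ℕ),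
      (∀ b ∈ P, b ≠ 0) ∧ P.join = lam ∧ P.map Multiset.sum = σ

theorem map_sub_one_filter_ne_zero {m : Multiset ℕ} (hm : ∀ i ∈ m, 2 ≤ i) (j : ℕ) :
    ((m + Multiset.replicate j 1).map (fun i => i - 1)).filter (· ≠ 0) =
      m.map (fun i => i - 1) := by
  rw [Multiset.map_add, Multiset.filter_add, Multiset.map_replicate,
    Multiset.filter_eq_self.2, Multiset.filter_eq_nil.2, add_zero]
  · intro a ha
    simp [Multiset.eq_of_mem_replicate ha]
  · intro a ha
    obtain ⟨i, hi, rfl⟩ := Multiset.mem_map.1 ha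
    have := hm i hi
    omega

theorem sum_filter_ne_zero (m : Multiset ℕ) : (m.filter (· ≠ 0)).sum = m.sum := by
  induction m using Multiset.induction_on with
  | empty => simp
  | cons a m ih => by_cases h : a = 0 <;> simp_all

theorem orbitSizes_eq_map_card_fiber {α : Type*} [Fintype α] (G : Subgroup (Equiv.Perm α))
    [Fintype (Quotient (MulAction.orbitRel G α))] :
    orbitSizes G = (Finset.univ : Finset (Quotient (MulAction.orbitRel G α))).val.map
      fun q => Nat.card {x : α // Quotient.mk (MulAction.orbitRel G α) x = q} := by
  have h (q : Quotient (MulAction.orbitRel G α)) : Nat.card (MulAction.orbit G q.out) =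
      Nat.card {x : α // Quotient.mk (MulAction.orbitRel G α) x = q} := by
    have hq (x : α) : x ∈ MulAction.orbit G q.out ↔
        Quotient.mk (MulAction.orbitRel G α) x = q := by
      conv_rhs => rw [← Quotient.out_eq q]
      exact (Quotient.eq (r := MulAction.orbitRel G α)).symm
    exact Nat.card_congr (Equiv.subtypeEquivRight hq)
  simp only [orbitSizes, h]
  congr!

/-- A connected bipartite multigraph with edge set `α` and endpoint maps `f`, `g` has at most
one more vertex than edges. -/
theorem card_add_card_le_of_connected {α V W : Type*} [Finite α] [Nonempty α]
    {f : α → V} {g : α → W} (hf : f.Surjective) (hg : g.Surjective)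
    (hconn : ∀ s : Set α, (∀ x y, f x = f y ∨ g x = g y → x ∈ s → y ∈ s) →
      s.Nonempty → s = Set.univ) :
    Nat.card V + Nat.card W ≤ Nat.card α + 1 := by
  have := Finite.of_surjective f hf
  have := Finite.of_surjective g hg
  let G : SimpleGraph (V ⊕ W) :=
    { Adj := fun u v => ∃ x, (u = .inl (f x) ∧ v = .inr (g x)) ∨ (u = .inr (g x) ∧ v = .inl (f x))
      symm := ⟨fun u v ⟨x, hx⟩ => ⟨x, by tauto⟩⟩
      loopless := ⟨by rintro u ⟨x, ⟨h, h'⟩ | ⟨h, h'⟩⟩ <;> simp_all⟩ }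
  have hadj (x : α) : G.Adj (.inl (f x)) (.inr (g x)) := ⟨x, .inl ⟨rfl, rfl⟩⟩
  obtain ⟨x₀⟩ := ‹Nonempty α›
  have hs := hconn {y | G.Reachable (.inl (f x₀)) (.inl (f y))} (by
    rintro x y (h | h) hx
    · simpa [← h] using hx
    · refine (SimpleGraph.Reachable.trans hx (hadj x).reachable).trans ?_
      rw [h]
      exact (hadj y).symm.reachable) ⟨x₀, SimpleGraph.Reachable.refl _⟩
  have hreach (y : α) : G.Reachable (.inl (f x₀)) (.inl (f y)) := by
    have : y ∈ (Set.univ : Set α) := trivial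
    rwa [← hs] at this
  have hG : G.Connected := by
    refine (SimpleGraph.connected_iff_exists_forall_reachable _).2 ⟨.inl (f x₀), ?_⟩
    rintro (v | w)
    · obtain ⟨y, rfl⟩ := hf v
      exact hreach y
    · obtain ⟨y, rfl⟩ := hg w
      exact (hreach y).trans (hadj y).reachable
  have hedge : Nat.card G.edgeSet ≤ Nat.card α := by
    refine Nat.card_le_card_of_surjective
      (fun x => (⟨s(.inl (f x), .inr (g x)), hadj x⟩ : G.edgeSet)) ?_
    rintro ⟨e, he⟩
    induction e using Sym2.ind with
    | _ u v =>
      obtain ⟨x, ⟨hu, hv⟩ | ⟨hu, hv⟩⟩ := he <;> dsimp only at hu hv <;> subst hu hv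
      · exact ⟨x, rfl⟩
      · exact ⟨x, Subtype.ext Sym2.eq_swap⟩
  have := hG.card_vert_le_card_edgeSet_add_one
  rw [Nat.card_sum] at this
  omega

/-- Merging along a common coarsening `Q` of `B` and `P`, with zero parts discarded. -/
theorem mergeLE_of_fiberwise {P B Q : Type*} [Fintype P] [Fintype B] [Fintype Q] [DecidableEq Q]
    (gP : P → Q) (gB : B → Q) (hgB : gB.Surjective) (c : P → ℕ) (t : B → ℕ) (w : Q → ℕ)
    (hw : ∀ q, w q ≤ ∑ x with gP x = q, c x)
    (ht : ∑ b, (t b + 1) = ∑ q, (w q + 1))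
    (hbij : gB.Injective → ∀ b, t b = w (gB b)) :
    MergeLE ((Finset.univ.val.map t).filter (· ≠ 0))
      ((Finset.univ.val.map c).filter (· ≠ 0)) := by
  have hfib : ∑ q, ∑ x with gP x = q, c x = ∑ x, c x := Finset.sum_fiberwise _ _ _
  have hle : ∑ q, w q ≤ ∑ x, c x := hfib ▸ Finset.sum_le_sum fun q _ => hw q
  have hcard : Fintype.card Q ≤ Fintype.card B := Fintype.card_le_of_surjective _ hgB
  simp only [Finset.sum_add_distrib, Finset.sum_const, Finset.card_univ, smul_eq_mul,
    mul_one] at ht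
  by_cases hlt : ∑ b, t b < ∑ x, c x
  · left
    rw [sum_filter_ne_zero, sum_filter_ne_zero]
    exact hlt
  have hinj : gB.Injective :=
    ((Fintype.bijective_iff_surjective_and_card gB).2 ⟨hgB, by omega⟩).1
  have hweq (q : Q) : w q = ∑ x with gP x = q, c x :=
    (Finset.sum_eq_sum_iff_of_le fun q _ => hw q).1 (by omega) q (Finset.mem_univ q)
  let blk (q : Q) : Multiset ℕ :=
    ((Finset.univ.filter fun x => gP x = q).val.map c).filter (· ≠ 0)
  have hsum (q : Q) : (blk q).sum = w q := by
    rw [hweq]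
    exact sum_filter_ne_zero _
  have hblk (q : Q) : blk q ≠ 0 ↔ w q ≠ 0 := by
    rw [← hsum, not_iff_not]
    refine ⟨fun h => by simp [h], fun h => Multiset.eq_zero_of_forall_notMem fun a ha => ?_⟩
    exact (Multiset.mem_filter.1 ha).2 (Multiset.sum_eq_zero_iff.1 h a ha)
  refine .inr ⟨(Finset.univ.filter fun q => w q ≠ 0).val.map blk, ?_, ?_, ?_⟩
  · intro b hb
    obtain ⟨q, hq, rfl⟩ := Multiset.mem_map.1 hb
    exact (hblk q).2 (Finset.mem_filter.1 hq).2
  · have h1 : ((Finset.univ.filter fun q => w q ≠ 0).val.map blk).join = ∑ q, blk q := by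
      rw [← Finset.sum_filter_of_ne fun q _ h => (hblk q).1 h]
      rfl
    rw [h1]
    ext a
    by_cases ha : a = 0
    · subst ha
      simp [blk]
    rw [Multiset.count_sum', Multiset.count_filter_of_pos (by simpa using ha),
      Multiset.count_map, ← Finset.filter_val, Finset.card_val,
      Finset.card_eq_sum_card_fiberwise (f := gP) (t := Finset.univ) (by simp)]
    refine Finset.sum_congr rfl fun q _ => ?_
    rw [Multiset.count_filter_of_pos (by simpa using ha), Multiset.count_map,
      ← Finset.filter_val, Finset.card_val, Finset.filter_comm]
  · have h2 : (Finset.univ : Finset B).val.map t = (Finset.univ : Finset Q).val.map w := by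
      have h3 : (Finset.univ : Finset Q).val = (Finset.univ : Finset B).val.map gB := by
        rw [← Finset.map_univ_equiv (Equiv.ofBijective gB ⟨hinj, hgB⟩)]
        rfl
      rw [h3, Multiset.map_map]
      exact Multiset.map_congr rfl fun b _ => hbij hinj b
    rw [h2, Multiset.filter_map, Multiset.map_map, Finset.filter_val]
    exact Multiset.map_congr rfl fun q _ => hsum q

theorem exists_quotient_of_involutive.{u} {α : Type u} [Finite α] {A : α → α}
    (hA : A.Involutive) (hne : ∀ x, A x ≠ x) :
    ∃ (V : Type u) (f : α → V), f.Surjective ∧ (∀ x, f x = f (A x)) ∧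
      Nat.card α = 2 * Nat.card V := by
  classical
  have := Fintype.ofFinite α
  have hf (x y : α) : s(x, A x) = s(y, A y) ↔ y = x ∨ y = A x := by
    rw [Sym2.eq_iff]
    constructor
    · rintro (h | h)
      · exact .inl h.1.symm
      · exact .inr h.2.symm
    · rintro (rfl | rfl) <;> simp [hA _]
  refine ⟨Set.range fun x => s(x, A x), Set.rangeFactorization _,
    Set.rangeFactorization_surjective, fun x => Subtype.ext ((hf x (A x)).2 (.inr rfl)), ?_⟩
  have := Fintype.ofFinite (Set.range fun x => s(x, A x))
  rw [Nat.card_eq_fintype_card, Nat.card_eq_fintype_card, ← Finset.card_univ (α := α),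
    Finset.card_eq_sum_card_fiberwise (f := Set.rangeFactorization fun x => s(x, A x))
      (t := Finset.univ) (by simp), mul_comm]
  refine Finset.sum_const_nat ?_
  rintro ⟨_, x, rfl⟩ -
  rw [← Finset.card_pair (hne x).symm]
  congr 1
  ext y
  simp only [Finset.mem_filter, Finset.mem_univ, true_and, Finset.mem_insert,
    Finset.mem_singleton, ← hf x y]
  exact Subtype.ext_iff.trans eq_comm

theorem sum_card_fiber_comp {α P Q : Type*} [Finite α] [Fintype P] [DecidableEq Q]
    (f : α → P) (g : P → Q) (q : Q) :
    ∑ p with g p = q, Nat.card {x // f x = p} = Nat.card {x // g (f x) = q} := by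
  classical
  have := Fintype.ofFinite α
  simp only [Nat.card_eq_fintype_card, Fintype.card_subtype]
  rw [Finset.card_eq_sum_card_fiberwise (f := f) (t := Finset.univ.filter fun p => g p = q)
    (fun x hx => by simpa using hx)]
  refine Finset.sum_congr rfl fun p hp => ?_
  congr 1
  ext x
  simp only [Finset.mem_filter, Finset.mem_univ, true_and] at hp ⊢
  constructor
  · rintro rfl
    exact ⟨hp, rfl⟩
  · exact And.right

/-- The map on orbit spaces induced by an inclusion of subgroups. -/
def orbitQuotientMap {α : Type*} {H G : Subgroup (Equiv.Perm α)} (h : H ≤ G) :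
    Quotient (MulAction.orbitRel H α) → Quotient (MulAction.orbitRel G α) :=
  Quotient.map' id fun _ _ ⟨g, hg⟩ => ⟨⟨g, h g.2⟩, hg⟩

/-- On an orbit of `⟨A, π⟩`, with `A` a fixed-point-free involution, connectivity bounds the
number of orbits of `π` by one plus half the size. -/
theorem card_orbits_le_of_involutive {α : Type*} [Finite α] {A π : Equiv.Perm α}
    (hA : Function.Involutive A) (hne : ∀ x, A x ≠ x)
    (hπ : Subgroup.zpowers π ≤ Subgroup.closure {A, π})
    (q : Quotient (MulAction.orbitRel (Subgroup.closure {A, π}) α)) :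
    ∃ m, Nat.card {x : α // Quotient.mk _ x = q} = 2 * m ∧
      Nat.card {p // orbitQuotientMap hπ p = q} ≤ m + 1 := by
  have hAG : A ∈ Subgroup.closure {A, π} := Subgroup.subset_closure (by simp)
  have hmk (a : Equiv.Perm α) (ha : a ∈ Subgroup.closure {A, π}) (x : α) :
      Quotient.mk (MulAction.orbitRel (Subgroup.closure {A, π}) α) (a x) = Quotient.mk _ x :=
    Quotient.sound' ⟨⟨a, ha⟩, rfl⟩
  let O := {x : α // Quotient.mk (MulAction.orbitRel (Subgroup.closure {A, π}) α) x = q}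
  have : Nonempty O := ⟨⟨q.out, q.out_eq⟩⟩
  let A' : O → O := fun x => ⟨A x, (hmk A hAG x).trans x.2⟩
  obtain ⟨V, f, hf, hfib, hcard⟩ := exists_quotient_of_involutive (A := A')
    (fun x => Subtype.ext (hA x.1)) (fun x h => hne x.1 (congrArg Subtype.val h))
  refine ⟨Nat.card V, hcard, ?_⟩
  let g : O → {p // orbitQuotientMap hπ p = q} := fun x => ⟨Quotient.mk _ x.1, x.2⟩
  have hg : g.Surjective := by
    rintro ⟨p, hp⟩
    induction p using Quotient.ind with
    | _ x => exact ⟨⟨x, hp⟩, rfl⟩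
  have key := card_add_card_le_of_connected hf hg (fun s hs ⟨x₀, hx₀⟩ => by
    have hstep (a : Equiv.Perm α) (ha : a = A ∨ a = π) (x y : O) (hxy : y.1 = a x.1) :
        x ∈ s ↔ y ∈ s := by
      have h : f x = f y ∨ g x = g y := by
        rcases ha with rfl | rfl
        · left
          rw [hfib x, Subtype.ext (a1 := A' x) (a2 := y) hxy.symm]
        · right
          refine Subtype.ext (Quotient.sound' ⟨⟨a⁻¹, by simp⟩, ?_⟩)
          simp [hxy, Subgroup.smul_def]
      exact ⟨hs x y h, hs y x (h.imp Eq.symm Eq.symm)⟩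
    have hG (a : Equiv.Perm α) (ha : a ∈ Subgroup.closure {A, π}) :
        ∀ x y : O, y.1 = a x.1 → (x ∈ s ↔ y ∈ s) := by
      induction ha using Subgroup.closure_induction with
      | mem a ha => exact hstep a ha
      | one =>
        intro x y h
        rw [Subtype.ext h]
      | mul a b _ hb iha ihb =>
        intro x y h
        have hz : Quotient.mk (MulAction.orbitRel (Subgroup.closure {A, π}) α) (b x.1) = q :=
          (hmk b hb x).trans x.2
        exact (ihb x ⟨b x.1, hz⟩ rfl).trans (iha _ y h)
      | inv a _ iha =>
        intro x y h
        exact (iha y x (by simp [h])).symm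
    refine Set.eq_univ_of_forall fun y => ?_
    obtain ⟨a, ha⟩ := Quotient.exact (y.2.trans x₀.2.symm)
    exact (hG a a.2 x₀ y ha.symm).1 hx₀)
  change Nat.card O = _ at hcard
  omega

/-- Let `μ` be a partition with all parts `≥ 2` and `|μ| = k ≥ 2`, let `n ≥ k`, and let
`I` be a perfect matching of `Fin (2n)`. If `π` is a permutation of `Fin (2n)` whose
nontrivial orbit sizes form the multiset `μ`, and `τ` is the partition with all parts
`≥ 2` such that `d(I, π I π⁻¹) = 2(τ, 1^{n−|τ|})`, then `τ̄ ≤ μ̄` in the merging order,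
where `ν̄` is obtained from `ν` by subtracting 1 from every part. -/
theorem d_conj_merge_bound (μ : Multiset ℕ) (hμ : ∀ i ∈ μ, 2 ≤ i)
    (k n : ℕ) (hk : μ.sum = k) (hk2 : 2 ≤ k) (hn : k ≤ n)
    (I : PerfMatching (2 * n)) (π : Equiv.Perm (Fin (2 * n)))
    (hπ : permOrbitSizes π = μ + Multiset.replicate (2 * n - k) 1)
    (τ : Multiset ℕ) (hτ : ∀ i ∈ τ, 2 ≤ i) (hτn : τ.sum ≤ n)
    (hd : dMatch I.1 (π * I.1 * π⁻¹) = twice (τ + Multiset.replicate (n - τ.sum) 1)) :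
    MergeLE (τ.map (fun i => i - 1)) (μ.map (fun i => i - 1)) := by
  classical
  obtain ⟨A, hA2, hne⟩ := I
  dsimp only at hd
  have hA : Function.Involutive A := fun x => by
    rw [← Equiv.Perm.mul_apply, hA2, Equiv.Perm.one_apply]
  have hAG : A ∈ Subgroup.closure {A, π} := Subgroup.subset_closure (by simp)
  have hπG : π ∈ Subgroup.closure {A, π} := Subgroup.subset_closure (by simp)
  have hZ : Subgroup.zpowers π ≤ Subgroup.closure {A, π} := by simpa using hπG
  have hH : Subgroup.closure {A, π * A * π⁻¹} ≤ Subgroup.closure {A, π} := by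
    rw [Subgroup.closure_le]
    rintro a (rfl | rfl)
    · exact hAG
    · exact mul_mem (mul_mem hπG hAG) (inv_mem hπG)
  have := Fintype.ofFinite (Quotient (MulAction.orbitRel (Subgroup.zpowers π) (Fin (2 * n))))
  have := Fintype.ofFinite
    (Quotient (MulAction.orbitRel (Subgroup.closure {A, π * A * π⁻¹}) (Fin (2 * n))))
  have := Fintype.ofFinite
    (Quotient (MulAction.orbitRel (Subgroup.closure {A, π}) (Fin (2 * n))))
  let sP (p : Quotient (MulAction.orbitRel (Subgroup.zpowers π) (Fin (2 * n)))) :=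
    Nat.card {x // Quotient.mk _ x = p}
  let sB (b : Quotient (MulAction.orbitRel (Subgroup.closure {A, π * A * π⁻¹}) (Fin (2 * n)))) :=
    Nat.card {x // Quotient.mk _ x = b}
  let sQ (q : Quotient (MulAction.orbitRel (Subgroup.closure {A, π}) (Fin (2 * n)))) :=
    Nat.card {x // Quotient.mk _ x = q}
  have hP : Finset.univ.val.map sP = μ + Multiset.replicate (2 * n - k) 1 :=
    (orbitSizes_eq_map_card_fiber _).symm.trans hπ
  have hB : Finset.univ.val.map sB = twice (τ + Multiset.replicate (n - τ.sum) 1) :=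
    (orbitSizes_eq_map_card_fiber _).symm.trans hd
  have hsP (p) : 1 ≤ sP p := by
    have : Nonempty {x // Quotient.mk _ x = p} := ⟨⟨p.out, p.out_eq⟩⟩
    exact Nat.card_pos
  have hsQ (q) : 1 ≤ sQ q := by
    have : Nonempty {x // Quotient.mk _ x = q} := ⟨⟨q.out, q.out_eq⟩⟩
    exact Nat.card_pos
  have hsB (b) : sB b = 2 * ((sB b / 2 - 1) + 1) := by
    have hb : sB b ∈ Finset.univ.val.map sB := Multiset.mem_map_of_mem _ (Finset.mem_univ b)
    rw [hB, twice] at hb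
    obtain ⟨i, hi, hib⟩ := Multiset.mem_map.1 hb
    have : 1 ≤ i := by
      rcases Multiset.mem_add.1 hi with h | h
      · exact (hτ i h).trans' (by norm_num)
      · exact (Multiset.eq_of_mem_replicate h).ge
    omega
  have hsQ2 (q) : sQ q = 2 * ((sQ q / 2 - 1) + 1) := by
    obtain ⟨m, hm, -⟩ := card_orbits_le_of_involutive hA hne hZ q
    have := hsQ q
    change sQ q = _ at hm
    omega
  have hμeq : μ.map (fun i => i - 1) =
      (Finset.univ.val.map fun p => sP p - 1).filter (· ≠ 0) := by
    rw [← map_sub_one_filter_ne_zero hμ (2 * n - k), ← hP, Multiset.map_map]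
    rfl
  have hτeq : τ.map (fun i => i - 1) =
      (Finset.univ.val.map fun b => sB b / 2 - 1).filter (· ≠ 0) := by
    have : (Finset.univ.val.map fun b => sB b / 2 - 1) =
        (Finset.univ.val.map sB).map fun i => i / 2 - 1 := by
      rw [Multiset.map_map]
      rfl
    rw [this, hB, twice, Multiset.map_map, ← map_sub_one_filter_ne_zero hτ (n - τ.sum)]
    simp
  rw [hμeq, hτeq]
  refine mergeLE_of_fiberwise (orbitQuotientMap hZ) (orbitQuotientMap hH) ?_ _ _
    (fun q => sQ q / 2 - 1) ?_ ?_ ?_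
  · exact Quotient.ind fun x => ⟨Quotient.mk _ x, rfl⟩
  · intro q
    obtain ⟨m, hm, hle⟩ := card_orbits_le_of_involutive hA hne hZ q
    have hsum : ∑ p with orbitQuotientMap hZ p = q, sP p = sQ q :=
      sum_card_fiber_comp (Quotient.mk _) (orbitQuotientMap hZ) q
    have hsplit : ∑ p with orbitQuotientMap hZ p = q, sP p =
        ∑ p with orbitQuotientMap hZ p = q, (sP p - 1) +
          (Finset.univ.filter fun p => orbitQuotientMap hZ p = q).card := by
      rw [Finset.card_eq_sum_ones, ← Finset.sum_add_distrib]
      exact Finset.sum_congr rfl fun p _ => (Nat.sub_add_cancel (hsP p)).symm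
    rw [Nat.card_eq_fintype_card, Fintype.card_subtype] at hle
    change sQ q = _ at hm
    omega
  · refine Nat.eq_of_mul_eq_mul_left two_pos ?_
    rw [Finset.mul_sum, Finset.mul_sum]
    simp only [← hsB, ← hsQ2]
    have h1 : ∑ b, sB b = Nat.card (Fin (2 * n)) := by
      rw [← Nat.card_sigma]
      exact Nat.card_congr (Equiv.sigmaFiberEquiv _)
    have h2 : ∑ q, sQ q = Nat.card (Fin (2 * n)) := by
      rw [← Nat.card_sigma]
      exact Nat.card_congr (Equiv.sigmaFiberEquiv _)
    rw [h1, h2]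
  · intro hinj b
    have : sB b = sQ (orbitQuotientMap hH b) :=
      Nat.card_congr (Equiv.subtypeEquivRight fun x => (hinj.eq_iff (a := Quotient.mk _ x)).symm)
    simp only [this]
end
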